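/- Let (z_k)_{k≥1} be a sequence in ℂ with |z_k| > 1 for all k and Σ_k (|z_k| − 1) < ∞, let (μ_k) be positive reals with Σ_k μ_k < ∞ satisfying: for every A > 0 there is a constant C_A such that for all integers n ≥ 2, Σ_{k : |z_k| < 1 + 1/n} μ_k ≤ C_A·(log n)^{−A}. Let μ = m + Σ_k μ_k δ_{z_k} (i.e. weight w ≡ 1 on the circle). Then liminf_{n→∞} τ_n ≥ ∏_k |z_k|^{−1}. -/

import Mathlib

open MeasureTheory Filter Finset

/-- Normalized arc-length (Haar) measure on the unit circle, viewed as a measure on `ℂ`. -/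
noncomputable def haarCircle : Measure ℂ :=
  ((ENNReal.ofReal (2 * Real.pi))⁻¹ • volume.restrict (Set.Ioc (0 : ℝ) (2 * Real.pi))).map
    (fun θ : ℝ => Complex.exp (θ * Complex.I))

/-- `τ_n`: the supremum of `|c_n|` over polynomials `P(z) = Σ_{j=0}^{n} c_j z^j` with
`∫ |P|² dμ ≤ 1`. -/
noncomputable def tauSeq (μ : Measure ℂ) (n : ℕ) : ℝ :=
  sSup { x : ℝ | ∃ c : ℕ → ℂ,
    (∫ z : ℂ, ‖∑ j ∈ Finset.range (n + 1), c j * z ^ j‖ ^ 2 ∂μ) ≤ 1 ∧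
    x = ‖c n‖ }


noncomputable def ee (θ : ℝ) : ℂ := Complex.exp (θ * Complex.I)

lemma ee_cont : Continuous ee := by unfold ee; fun_prop
lemma ee_norm (θ : ℝ) : ‖ee θ‖ = 1 := by simp [ee, Complex.norm_exp_ofReal_mul_I]
lemma ee_ne (θ : ℝ) : ee θ ≠ 0 := by simp [ee]
lemma ee_conj (θ : ℝ) : (starRingEnd ℂ) (ee θ) = (ee θ)⁻¹ := by
  rw [Complex.inv_def, Complex.normSq_eq_norm_sq, ee_norm]; simp

lemma ee_zpow_int (k : ℤ) : ∫ θ in (0:ℝ)..(2*Real.pi), (ee θ)^k = if k = 0 then (2*Real.pi : ℂ) else 0 := by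
  split_ifs with h
  · subst h; simp
  · have hc : (k * Complex.I : ℂ) ≠ 0 := by simp [h]
    have := @integral_exp_mul_complex 0 (2*Real.pi) (k * Complex.I) hc
    have h2 : ∀ θ : ℝ, (ee θ)^k = Complex.exp (k * Complex.I * θ) := by
      intro θ; rw [ee, ← Complex.exp_int_mul]; ring_nf
    simp only [h2]
    rw [this]
    have : Complex.exp (k * Complex.I * ((2*Real.pi : ℝ):ℂ)) = 1 := by
      rw [Complex.exp_eq_one_iff]; exact ⟨k, by push_cast; ring⟩
    rw [this]; simp

/-- normalized mean -/
noncomputable def cf (f : ℂ → ℂ) (j : ℕ) : ℂ :=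
  (2*Real.pi : ℂ)⁻¹ * ∫ θ in (0:ℝ)..(2*Real.pi), f (ee θ) * (ee θ)⁻¹ ^ j

lemma twopi_ne : (2*Real.pi : ℂ) ≠ 0 := by simp [Real.pi_ne_zero]

lemma parseval_c (c : ℕ → ℂ) (n : ℕ) :
    ∫ θ in (0:ℝ)..(2*Real.pi), (∑ j ∈ range n, c j * (ee θ)^j) * (starRingEnd ℂ) (∑ j ∈ range n, c j * (ee θ)^j)
     = 2*Real.pi * ∑ j ∈ range n, (‖c j‖^2 : ℂ) := by
  have h : ∀ θ : ℝ, (∑ j ∈ range n, c j * (ee θ)^j) * (starRingEnd ℂ) (∑ j ∈ range n, c j * (ee θ)^j)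
     = ∑ i ∈ range n, ∑ j ∈ range n, c i * (starRingEnd ℂ) (c j) * (ee θ)^((i:ℤ) - j) := by
    intro θ
    rw [map_sum, Finset.sum_mul_sum]
    refine Finset.sum_congr rfl fun i _ => Finset.sum_congr rfl fun j _ => ?_
    rw [map_mul, map_pow, ee_conj, zpow_sub₀ (ee_ne θ), zpow_natCast, zpow_natCast, inv_pow]
    field_simp
  have hcont : ∀ k : ℤ, Continuous fun θ => (ee θ)^k := fun k =>
    ee_cont.zpow₀ k (fun θ => Or.inl (ee_ne θ))
  simp only [h]
  rw [intervalIntegral.integral_finsetSum]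
  · rw [Finset.mul_sum]
    refine Finset.sum_congr rfl fun i hi => ?_
    rw [intervalIntegral.integral_finsetSum]
    · simp only [intervalIntegral.integral_const_mul, ee_zpow_int]
      rw [Finset.sum_eq_single i]
      · simp [Complex.mul_conj, Complex.normSq_eq_norm_sq]; ring
      · intro j _ hj
        rw [if_neg (by omega)]; simp
      · exact fun h => absurd hi h
    · intro j _
      exact ((hcont _).const_mul _).intervalIntegrable _ _
  · intro i _
    exact (continuous_finsetSum _ fun j _ => (hcont _).const_mul _).intervalIntegrable _ _

lemma parseval_r (c : ℕ → ℂ) (n : ℕ) :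
    ∫ θ in (0:ℝ)..(2*Real.pi), ‖∑ j ∈ range n, c j * (ee θ)^j‖^2
     = 2*Real.pi * ∑ j ∈ range n, ‖c j‖^2 := by
  have := parseval_c c n
  simp only [Complex.mul_conj, Complex.normSq_eq_norm_sq] at this
  rw [intervalIntegral.integral_ofReal] at this
  exact_mod_cast this

lemma bessel (f : ℂ → ℂ) (hf : Continuous fun θ => f (ee θ)) (hb : ∀ θ, ‖f (ee θ)‖ ≤ 1) (n : ℕ) :
    ∑ j ∈ range n, ‖cf f j‖^2 ≤ 1 := by
  set T : ℝ → ℂ := fun θ => ∑ j ∈ range n, cf f j * (ee θ)^j with hT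
  have hTc : Continuous T := continuous_finsetSum _ fun j _ => (ee_cont.pow j).const_mul _
  have hpi := Real.pi_pos
  have h1 : ∫ θ in (0:ℝ)..(2*Real.pi), f (ee θ) * (starRingEnd ℂ) (T θ) = 2*Real.pi * ∑ j ∈ range n, (‖cf f j‖^2 : ℂ) := by
    have : ∀ θ, f (ee θ) * (starRingEnd ℂ) (T θ) = ∑ j ∈ range n, (starRingEnd ℂ) (cf f j) * (f (ee θ) * (ee θ)⁻¹ ^ j) := by
      intro θ
      rw [hT]; simp only
      rw [map_sum, Finset.mul_sum]
      refine Finset.sum_congr rfl fun j _ => ?_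
      rw [map_mul, map_pow, ee_conj]; ring
    simp only [this]
    rw [intervalIntegral.integral_finsetSum, Finset.mul_sum]
    · refine Finset.sum_congr rfl fun j _ => ?_
      rw [intervalIntegral.integral_const_mul]
      have : ∫ θ in (0:ℝ)..(2*Real.pi), f (ee θ) * (ee θ)⁻¹ ^ j = 2*Real.pi * cf f j := by
        rw [cf, mul_inv_cancel_left₀ twopi_ne]
      rw [this, mul_left_comm, Complex.conj_mul']
    · intro j _
      exact ((hf.mul ((ee_cont.inv₀ ee_ne).pow j)).const_mul _).intervalIntegrable _ _
  have h1r : ∫ θ in (0:ℝ)..(2*Real.pi), (f (ee θ) * (starRingEnd ℂ) (T θ)).re = 2*Real.pi * ∑ j ∈ range n, ‖cf f j‖^2 := by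
    have h2 := Complex.reCLM.intervalIntegral_comp_comm (μ := volume)
      (Continuous.intervalIntegrable (hf.mul (Complex.continuous_conj.comp hTc)) 0 (2*Real.pi))
    simp only [Complex.reCLM_apply, Pi.mul_apply, Function.comp] at h2
    rw [h2, h1]
    norm_cast
  have h2 := parseval_r (cf f) n
  have h3 : ∀ θ, 2 * (f (ee θ) * (starRingEnd ℂ) (T θ)).re - ‖T θ‖^2 ≤ 1 := by
    intro θ
    have a := Complex.re_le_norm (f (ee θ) * (starRingEnd ℂ) (T θ))
    rw [norm_mul, RCLike.norm_conj] at a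
    nlinarith [hb θ, norm_nonneg (T θ), norm_nonneg (f (ee θ)), sq_nonneg (‖T θ‖ - 1)]
  have c1 : Continuous fun θ => 2 * (f (ee θ) * (starRingEnd ℂ) (T θ)).re :=
    (Complex.continuous_re.comp (hf.mul (Complex.continuous_conj.comp hTc))).const_mul _
  have c2 : Continuous fun θ => ‖T θ‖^2 := hTc.norm.pow 2
  have h4 := intervalIntegral.integral_mono_on (μ := volume) (a := 0) (b := 2*Real.pi) (by positivity)
    ((c1.sub c2).intervalIntegrable _ _) (continuous_const.intervalIntegrable _ _) (fun θ _ => h3 θ)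
  simp only [Pi.sub_apply] at h4
  rw [intervalIntegral.integral_sub (c1.intervalIntegrable _ _) (c2.intervalIntegrable _ _),
    intervalIntegral.integral_const_mul, h1r, h2] at h4
  simp at h4
  nlinarith

lemma ker_lower (r t : ℝ) (hr0 : 0 ≤ r) (hr : r < 1) (ht : |t| ≤ Real.pi) :
    (1 - r + |t|) / (2*Real.pi) ≤ ‖1 - r * ee t‖ := by
  have hpi := Real.pi_gt_three
  have h1 : 1 - r ≤ ‖1 - r * ee t‖ := by
    have := norm_sub_norm_le (1:ℂ) (r * ee t)
    rw [norm_mul, ee_norm] at this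
    simpa [abs_of_nonneg hr0] using this
  have h2 : ‖1 - ee t‖ ≤ ‖1 - r * ee t‖ + (1 - r) := by
    have : (1 - ee t) = (1 - r * ee t) + (((r - 1 : ℝ):ℂ) * ee t) := by push_cast; ring
    rw [this]
    refine (norm_add_le _ _).trans ?_
    rw [norm_mul, ee_norm, Complex.norm_real, Real.norm_eq_abs, abs_of_nonpos (by linarith)]
    linarith
  have h3 : 2 / Real.pi * |t| ≤ ‖1 - ee t‖ := by
    have e : ‖1 - ee t‖ = ‖Complex.exp (Complex.I * t) - 1‖ := by
      rw [norm_sub_rev, ee, mul_comm]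
    rw [e, Complex.norm_exp_I_mul_ofReal_sub_one, norm_mul, Real.norm_eq_abs, Real.norm_eq_abs]
    have := Real.mul_abs_le_abs_sin (x := t/2) (by rw [abs_div]; norm_num; linarith)
    rw [abs_div] at this
    norm_num at this ⊢
    have e2 : 2 / Real.pi * |t| = 2 * (|t| / Real.pi) := by ring
    linarith
  have h4 : |t| / Real.pi ≤ ‖1 - r * ee t‖ := by
    have : |t| / Real.pi = (2 / Real.pi * |t|)/2 := by ring
    rw [this]; linarith
  rw [div_le_iff₀ (by positivity)] at h4 ⊢
  nlinarith [abs_nonneg t]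

lemma ker_int (r : ℝ) (hr0 : 0 ≤ r) (hr : r < 1) :
    ∫ t in (-Real.pi)..Real.pi, ‖1 - r * ee t‖⁻¹ ≤ 4 * Real.pi * Real.log (1 + Real.pi / (1 - r)) := by
  have hpi := Real.pi_pos
  have hd : 0 < 1 - r := by linarith
  have hne : ∀ t, (1 - r * ee t) ≠ 0 := by
    intro t h
    have : ‖(r * ee t : ℂ)‖ = 1 := by rw [← sub_eq_zero.mp h]; simp
    rw [norm_mul, ee_norm] at this
    simp [abs_of_nonneg hr0] at this
    linarith
  have c1 : Continuous fun t => ‖1 - r * ee t‖⁻¹ :=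
    (continuous_const.sub (ee_cont.const_mul _)).norm.inv₀ (fun t => norm_ne_zero_iff.mpr (hne t))
  have c2 : Continuous fun t : ℝ => 2*Real.pi * (1 - r + |t|)⁻¹ :=
    ((continuous_const.add continuous_abs).inv₀ (fun t => by have := abs_nonneg t; simp only [Pi.add_apply]; linarith)).const_mul _
  have h1 := intervalIntegral.integral_mono_on (μ := volume) (a := -Real.pi) (b := Real.pi) (by linarith)
    (c1.intervalIntegrable _ _) (c2.intervalIntegrable _ _) (fun t ht => by
      have := ker_lower r t hr0 hr (abs_le.mpr ht)
      have h := inv_anti₀ (by positivity) this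
      rw [inv_div, div_eq_mul_inv] at h
      exact h)
  refine h1.trans ?_
  have h0 : ∫ t in (0:ℝ)..Real.pi, 2*Real.pi * (1 - r + |t|)⁻¹ = 2*Real.pi * Real.log (1 + Real.pi / (1 - r)) := by
    have : ∫ t in (0:ℝ)..Real.pi, 2*Real.pi * (1 - r + |t|)⁻¹ = ∫ t in (0:ℝ)..Real.pi, 2*Real.pi * (1 - r + t)⁻¹ := by
      apply intervalIntegral.integral_congr
      intro t ht
      rw [Set.uIcc_of_le hpi.le] at ht
      simp only [abs_of_nonneg ht.1]
    rw [this, intervalIntegral.integral_const_mul]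
    rw [intervalIntegral.integral_comp_add_left (fun x => x⁻¹), integral_inv_of_pos (by linarith) (by linarith)]
    congr 2
    field_simp
    ring
  have h00 : ∫ t in (-Real.pi)..0, 2*Real.pi * (1 - r + |t|)⁻¹ = ∫ t in (0:ℝ)..Real.pi, 2*Real.pi * (1 - r + |t|)⁻¹ := by
    have := intervalIntegral.integral_comp_neg (a := 0) (b := Real.pi) (fun t : ℝ => 2*Real.pi * (1 - r + |t|)⁻¹)
    simp only [abs_neg, neg_zero] at this
    exact this.symm
  rw [← intervalIntegral.integral_add_adjacent_intervals (c2.intervalIntegrable (-Real.pi) 0) (c2.intervalIntegrable 0 Real.pi),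
    h00, h0]
  linarith

lemma ker_int' (w : ℂ) (hw : ‖w‖ < 1) :
    ∫ θ in (0:ℝ)..(2*Real.pi), ‖1 - w * (ee θ)⁻¹‖⁻¹ ≤ 4 * Real.pi * Real.log (1 + Real.pi / (1 - ‖w‖)) := by
  have hw' : w = ‖w‖ * ee w.arg := (Complex.norm_mul_exp_arg_mul_I w).symm
  have hper : Function.Periodic (fun t => ‖1 - (‖w‖:ℂ) * ee t‖⁻¹) (2*Real.pi) := by
    intro t
    have : ee (t + 2*Real.pi) = ee t := by
      simp only [ee]; push_cast; rw [add_mul, Complex.exp_add, Complex.exp_two_pi_mul_I, mul_one]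
    simp only [this]
  have h1 : ∀ θ, ‖1 - w * (ee θ)⁻¹‖⁻¹ = (fun t => ‖1 - (‖w‖:ℂ) * ee t‖⁻¹) (w.arg - θ) := by
    intro θ
    have : ee (w.arg - θ) = ee w.arg * (ee θ)⁻¹ := by
      simp only [ee]; push_cast; rw [sub_mul, Complex.exp_sub]; rfl
    simp only [this]
    rw [← mul_assoc, ← hw']
  simp only [h1]
  rw [intervalIntegral.integral_comp_sub_left (fun t => ‖1 - (‖w‖:ℂ) * ee t‖⁻¹)]
  have := hper.intervalIntegral_add_eq (w.arg - 2*Real.pi) (-Real.pi)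
  rw [show w.arg - 2*Real.pi + 2*Real.pi = w.arg - 0 by ring, show -Real.pi + 2*Real.pi = Real.pi by ring] at this
  rw [this]
  exact ker_int _ (norm_nonneg _) hw

lemma tail_bound (f : ℂ → ℂ) (hf : Continuous fun θ => f (ee θ)) (hb : ∀ θ, ‖f (ee θ)‖ ≤ 1) (n M : ℕ)
    (w : ℂ) (hw : ‖w‖ < 1) :
    ‖∑ m ∈ range M, cf f (n + m) * w^m‖ ≤ 4 * Real.log (1 + Real.pi / (1 - ‖w‖)) := by
  have hpi := Real.pi_pos
  have hne : ∀ t, (1 - w * (ee t)⁻¹) ≠ 0 := by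
    intro t h
    have : ‖(w * (ee t)⁻¹ : ℂ)‖ = 1 := by rw [← sub_eq_zero.mp h]; simp
    rw [norm_mul, norm_inv, ee_norm] at this
    simp at this
    linarith
  have ci : Continuous fun t => (ee t)⁻¹ := ee_cont.inv₀ ee_ne
  have c1 : Continuous fun t => 2 * ‖1 - w * (ee t)⁻¹‖⁻¹ :=
    ((continuous_const.sub (ci.const_mul _)).norm.inv₀ (fun t => norm_ne_zero_iff.mpr (hne t))).const_mul _
  have h1 : ∑ m ∈ range M, cf f (n + m) * w^m = (2*Real.pi : ℂ)⁻¹ * ∫ θ in (0:ℝ)..(2*Real.pi),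
      ∑ m ∈ range M, w^m * (f (ee θ) * (ee θ)⁻¹ ^ (n+m)) := by
    rw [intervalIntegral.integral_finsetSum, Finset.mul_sum]
    · refine Finset.sum_congr rfl fun j _ => ?_
      rw [intervalIntegral.integral_const_mul, cf]; ring
    · intro j _
      exact ((hf.mul (ci.pow _)).const_mul _).intervalIntegrable _ _
  have h2 : ∀ θ, ‖∑ m ∈ range M, w^m * (f (ee θ) * (ee θ)⁻¹ ^ (n+m))‖ ≤ 2 * ‖1 - w * (ee θ)⁻¹‖⁻¹ := by
    intro θ
    have : ∑ m ∈ range M, w^m * (f (ee θ) * (ee θ)⁻¹ ^ (n+m)) =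
       f (ee θ) * (ee θ)⁻¹ ^ n * ((1 - (w * (ee θ)⁻¹)^M) * (1 - w * (ee θ)⁻¹)⁻¹) := by
      have g : ∑ m ∈ range M, (w * (ee θ)⁻¹)^m = (1 - (w * (ee θ)⁻¹)^M) * (1 - w * (ee θ)⁻¹)⁻¹ := by
        rw [eq_mul_inv_iff_mul_eq₀ (hne θ)]
        exact geom_sum_mul_neg _ _
      rw [← g, Finset.mul_sum]
      refine Finset.sum_congr rfl fun j _ => ?_
      rw [pow_add, mul_pow]; ring
    rw [this, norm_mul, norm_mul, norm_mul, norm_inv, norm_pow, norm_inv, ee_norm]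
    have h3 : ‖1 - (w * (ee θ)⁻¹)^M‖ ≤ 2 := by
      refine (norm_sub_le _ _).trans ?_
      rw [norm_pow, norm_mul, norm_inv, ee_norm]
      simp
      have := pow_le_one₀ (norm_nonneg w) hw.le (n := M)
      linarith
    have h4 : (0:ℝ) ≤ ‖1 - w * (ee θ)⁻¹‖⁻¹ := by positivity
    have := mul_le_mul_of_nonneg_right h3 h4
    simp only [inv_one, one_pow, mul_one]
    calc _ ≤ 1 * (‖1 - (w * (ee θ)⁻¹)^M‖ * ‖1 - w * (ee θ)⁻¹‖⁻¹) :=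
          mul_le_mul_of_nonneg_right (hb θ) (by positivity)
      _ ≤ _ := by linarith
  rw [h1, norm_mul]
  have h5 := intervalIntegral.norm_integral_le_of_norm_le (μ := volume) (a := 0) (b := 2*Real.pi) (by positivity)
    (Eventually.of_forall fun θ _ => h2 θ) (c1.intervalIntegrable _ _)
  rw [intervalIntegral.integral_const_mul] at h5
  have h6 := ker_int' w hw
  have h7 : ‖(2*Real.pi : ℂ)⁻¹‖ = (2*Real.pi)⁻¹ := by
    rw [norm_inv, norm_mul]; simp [abs_of_pos hpi]
  rw [h7, inv_mul_le_iff₀ (by positivity)]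
  linarith

noncomputable def blas (w : ℕ → ℂ) (N : ℕ) (x : ℂ) : ℂ :=
  ∏ k ∈ range N, (w k - x) / (1 - (starRingEnd ℂ) (w k) * x)

lemma one_sub_ne (w x : ℂ) (hw : ‖w‖ < 1) (hx : ‖x‖ ≤ 1) : 1 - (starRingEnd ℂ) w * x ≠ 0 := by
  intro h
  have : ‖(starRingEnd ℂ) w * x‖ = 1 := by rw [← sub_eq_zero.mp h]; simp
  rw [norm_mul, RCLike.norm_conj] at this
  nlinarith [norm_nonneg w, norm_nonneg x]

lemma blas_cont (w : ℕ → ℂ) (hw : ∀ k, ‖w k‖ < 1) (N : ℕ) : Continuous fun θ => blas w N (ee θ) := by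
  unfold blas
  refine continuous_finsetProd _ fun k _ => ?_
  exact (continuous_const.sub ee_cont).div (continuous_const.sub (ee_cont.const_mul _))
    (fun θ => one_sub_ne _ _ (hw k) (ee_norm θ).le)

lemma blas_norm (w : ℕ → ℂ) (hw : ∀ k, ‖w k‖ < 1) (N : ℕ) (θ : ℝ) : ‖blas w N (ee θ)‖ ≤ 1 := by
  unfold blas
  rw [norm_prod]
  apply Finset.prod_le_one
  · intros; positivity
  · intro k _
    have h : 1 - (starRingEnd ℂ) (w k) * ee θ = - (starRingEnd ℂ) (w k - ee θ) * ee θ := by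
      rw [map_sub, ee_conj]
      have := ee_ne θ
      field_simp
      ring
    rw [norm_div, h, norm_mul, norm_neg, RCLike.norm_conj, ee_norm, mul_one]
    exact div_self_le_one _

lemma blas_dcc (w : ℕ → ℂ) (hw : ∀ k, ‖w k‖ < 1) (N : ℕ) : DiffContOnCl ℂ (blas w N) (Metric.ball 0 1) := by
  apply DifferentiableOn.diffContOnCl
  rw [closure_ball _ one_ne_zero]
  unfold blas
  refine DifferentiableOn.fun_finsetProd fun k _ => ?_
  refine DifferentiableOn.div (by fun_prop) (by fun_prop) fun x hx => one_sub_ne _ _ (hw k) (by simpa using hx)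

lemma blas_hasSum (w : ℕ → ℂ) (hw : ∀ k, ‖w k‖ < 1) (N : ℕ) (x : ℂ) (hx : ‖x‖ < 1) :
    HasSum (fun j => cf (blas w N) j * x^j) (blas w N x) := by
  have h := (blas_dcc w hw N)
  have h1 := (DiffContOnCl.hasFPowerSeriesOnBall (R := 1) (by simpa using h) (by simp)).hasSum
    (y := x) (by
      rw [Metric.mem_eball, edist_zero_right, ← ofReal_norm, ENNReal.ofReal_lt_iff_lt_toReal (norm_nonneg _) (by simp)]
      simpa using hx)
  rw [zero_add] at h1
  have key : (fun j => cf (blas w N) j * x^j) = fun n => (cauchyPowerSeries (blas w N) 0 ((1:NNReal):ℝ) n) fun _ => x := by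
    ext j
    rw [cauchyPowerSeries_apply, cf, circleIntegral]
    simp only [smul_eq_mul, deriv_circleMap, sub_zero, NNReal.coe_one]
    have e : ∀ θ, circleMap 0 1 θ = ee θ := by intro θ; simp [circleMap, ee]
    simp only [e]
    have e2 : ∀ θ, ee θ * Complex.I * ((x / ee θ)^j * ((ee θ)⁻¹ * blas w N (ee θ))) =
        (Complex.I * x^j) * (blas w N (ee θ) * (ee θ)⁻¹ ^ j) := by
      intro θ
      have := ee_ne θ
      rw [div_eq_mul_inv, mul_pow]
      calc _ = (ee θ * (ee θ)⁻¹) * ((Complex.I * x^j) * (blas w N (ee θ) * (ee θ)⁻¹ ^ j)) := by ring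
        _ = _ := by rw [mul_inv_cancel₀ this, one_mul]
    simp only [e2]
    rw [intervalIntegral.integral_const_mul]
    have := Complex.I_ne_zero
    have := twopi_ne
    have e3 : (2 * Real.pi * Complex.I : ℂ)⁻¹ = (2*Real.pi : ℂ)⁻¹ * Complex.I⁻¹ := by rw [mul_inv]
    rw [e3]
    field_simp
  rw [key]; exact h1

lemma cf_le_one (w : ℕ → ℂ) (hw : ∀ k, ‖w k‖ < 1) (N j : ℕ) : ‖cf (blas w N) j‖ ≤ 1 := by
  have := bessel (blas w N) (blas_cont w hw N) (blas_norm w hw N) (j+1)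
  have h2 := Finset.single_le_sum (f := fun j => ‖cf (blas w N) j‖^2) (fun i _ => by positivity) (Finset.self_mem_range_succ j)
  have : ‖cf (blas w N) j‖^2 ≤ 1 := h2.trans this
  exact (sq_le_one_iff₀ (norm_nonneg _)).mp this

lemma cf_zero (w : ℕ → ℂ) (hw : ∀ k, ‖w k‖ < 1) (N : ℕ) : ‖cf (blas w N) 0‖ = ∏ k ∈ range N, ‖w k‖ := by
  have h := blas_hasSum w hw N 0 (by simp)
  have h2 := hasSum_single (f := fun j => cf (blas w N) j * (0:ℂ)^j) 0 (by intro j hj; simp [hj])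
  have := h2.unique h
  simp only [pow_zero, mul_one] at this
  rw [this, blas, norm_prod]; simp

lemma blas_zero_bound (w : ℕ → ℂ) (hw : ∀ k, ‖w k‖ < 1) (N k M : ℕ) (hk : k < N) :
    ‖∑ j ∈ range M, cf (blas w N) j * (w k)^j‖ ≤ ‖w k‖^M * (1 - ‖w k‖)⁻¹ := by
  have h := blas_hasSum w hw N (w k) (hw k)
  have h0 : blas w N (w k) = 0 := by
    unfold blas
    apply Finset.prod_eq_zero (mem_range.mpr hk); simp
  rw [h0] at h
  have h1 := (hasSum_nat_add_iff' M).mpr h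
  rw [zero_sub] at h1
  have h2 : HasSum (fun j => ‖w k‖^M * ‖w k‖^j) (‖w k‖^M * (1 - ‖w k‖)⁻¹) :=
    (hasSum_geometric_of_lt_one (norm_nonneg _) (hw k)).mul_left _
  have := h1.norm_le_of_bounded h2 (fun j => by
    rw [norm_mul, norm_pow, add_comm, pow_add]
    exact mul_le_of_le_one_left (by positivity) (cf_le_one w hw N _))
  rwa [norm_neg] at this

/-- coefficient sequence of the (possibly infinite) Blaschke product -/
lemma exists_coeff (w : ℕ → ℂ) (hw : ∀ k, ‖w k‖ < 1) (L : ℝ)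
    (hL : Tendsto (fun N => ∏ k ∈ range N, ‖w k‖) atTop (nhds L)) :
    ∃ b : ℕ → ℂ, ‖b 0‖ = L ∧ (∀ n, ∑ j ∈ range n, ‖b j‖^2 ≤ 1) ∧
      (∀ n M x, ‖x‖ < 1 → ‖∑ m ∈ range M, b (n + m) * x^m‖ ≤ 4 * Real.log (1 + Real.pi / (1 - ‖x‖))) ∧
      (∀ k M, ‖∑ j ∈ range M, b j * (w k)^j‖ ≤ ‖w k‖^M * (1 - ‖w k‖)⁻¹) := by
  have hc : IsCompact (Set.pi Set.univ fun _ : ℕ => Metric.closedBall (0:ℂ) 1) :=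
    isCompact_univ_pi fun _ => isCompact_closedBall _ _
  obtain ⟨b, -, φ, hφ, hb⟩ := hc.tendsto_subseq (x := fun N => cf (blas w N))
    (fun N => by simp only [Set.mem_pi, mem_closedBall_zero_iff]; exact fun j _ => cf_le_one w hw N j)
  have hj : ∀ j, Tendsto (fun N => cf (blas w (φ N)) j) atTop (nhds (b j)) := fun j => (tendsto_pi_nhds.mp hb) j
  refine ⟨b, ?_, ?_, ?_, ?_⟩
  · refine tendsto_nhds_unique (hj 0).norm ?_
    simp only [cf_zero w hw]
    exact hL.comp hφ.tendsto_atTop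
  · intro n
    refine le_of_tendsto (tendsto_finsetSum _ fun j _ => ((hj j).norm.pow 2)) (Eventually.of_forall fun N => ?_)
    exact bessel _ (blas_cont w hw _) (blas_norm w hw _) n
  · intro n M x hx
    refine le_of_tendsto (tendsto_finsetSum _ fun m _ => ((hj (n+m)).mul_const (x^m))).norm (Eventually.of_forall fun N => ?_)
    exact tail_bound _ (blas_cont w hw _) (blas_norm w hw _) n M x hx
  · intro k M
    refine le_of_tendsto (tendsto_finsetSum _ fun m _ => ((hj m).mul_const (w k^m))).norm ?_
    filter_upwards [hφ.tendsto_atTop.eventually_gt_atTop k] with N hN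
    exact blas_zero_bound w hw _ k M hN

/-- Bound of the partial sums at the zeros -/
lemma partial_le (b : ℕ → ℂ) (x : ℂ) (hx : ‖x‖ < 1) (C K : ℝ) (n : ℕ)
    (h1 : ∀ M, ‖∑ m ∈ range M, b (n + m) * x^m‖ ≤ C)
    (h2 : ∀ M, ‖∑ j ∈ range M, b j * x^j‖ ≤ ‖x‖^M * K) :
    ‖∑ j ∈ range n, b j * x^j‖ ≤ ‖x‖^n * C := by
  have h3 : ∀ M, ‖∑ j ∈ range n, b j * x^j‖ ≤ ‖x‖^(n+M) * K + ‖x‖^n * C := by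
    intro M
    have e : ∑ j ∈ range n, b j * x^j = ∑ j ∈ range (n+M), b j * x^j - x^n * ∑ m ∈ range M, b (n + m) * x^m := by
      rw [Finset.sum_range_add, Finset.mul_sum]
      simp only [pow_add]
      rw [eq_sub_iff_add_eq]
      congr 1
      exact Finset.sum_congr rfl fun i _ => by ring
    rw [e]
    refine (norm_sub_le _ _).trans (add_le_add (h2 _) ?_)
    rw [norm_mul, norm_pow]
    exact mul_le_mul_of_nonneg_left (h1 M) (by positivity)
  have h4 : Tendsto (fun M => ‖x‖^(n+M) * K + ‖x‖^n * C) atTop (nhds (0 * K + ‖x‖^n * C)) := by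
    refine Tendsto.add_const _ (Tendsto.mul_const _ ?_)
    have := (tendsto_pow_atTop_nhds_zero_of_lt_one (norm_nonneg x) hx)
    have h5 := this.comp (tendsto_add_atTop_nat n)
    simpa [Function.comp_def, add_comm] using h5
  rw [zero_mul, zero_add] at h4
  exact ge_of_tendsto h4 (Eventually.of_forall h3)

lemma tail_small (b : ℕ → ℂ) (x : ℂ) (hx : ‖x‖ < 1) (s : ℝ) (n M : ℕ) (h : ∀ m, ‖b (n+m)‖ ≤ s) :
    ‖∑ m ∈ range M, b (n + m) * x^m‖ ≤ s * (1 - ‖x‖)⁻¹ := by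
  have hs : 0 ≤ s := (norm_nonneg _).trans (h 0)
  refine (norm_sum_le _ _).trans ?_
  calc _ ≤ ∑ m ∈ range M, s * ‖x‖^m := by
        refine Finset.sum_le_sum fun m _ => ?_
        rw [norm_mul, norm_pow]
        exact mul_le_mul_of_nonneg_right (h m) (by positivity)
    _ = s * ∑ m ∈ range M, ‖x‖^m := by rw [Finset.mul_sum]
    _ ≤ _ := by
        refine mul_le_mul_of_nonneg_left ?_ hs
        have := hasSum_geometric_of_lt_one (norm_nonneg _) hx
        exact sum_le_hasSum _ (fun i _ => by positivity) this

lemma b_tendsto (b : ℕ → ℂ) (h : ∀ n, ∑ j ∈ range n, ‖b j‖^2 ≤ 1) : Tendsto b atTop (nhds 0) := by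
  have h1 : Summable fun j => ‖b j‖^2 := summable_of_sum_range_le (fun _ => by positivity) h
  have h2 := h1.tendsto_atTop_zero
  rw [tendsto_zero_iff_norm_tendsto_zero]
  have h3 := h2.sqrt
  simpa [Real.sqrt_sq] using h3

/-- F_n(k) tends to zero -/
lemma partial_tendsto (b : ℕ → ℂ) (hb : ∀ n, ∑ j ∈ range n, ‖b j‖^2 ≤ 1) (x : ℂ) (hx : ‖x‖ < 1) (hx0 : x ≠ 0) (K : ℝ)
    (h2 : ∀ M, ‖∑ j ∈ range M, b j * x^j‖ ≤ ‖x‖^M * K) :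
    Tendsto (fun n => (‖x‖^n)⁻¹ * ‖∑ j ∈ range n, b j * x^j‖) atTop (nhds 0) := by
  rw [Metric.tendsto_atTop]
  intro ε hε
  have hx1 : 0 < 1 - ‖x‖ := by linarith
  have hxp : 0 < ‖x‖ := norm_pos_iff.mpr hx0
  obtain ⟨N, hN⟩ := (Metric.tendsto_atTop.mp (b_tendsto b hb)) (ε/2 * (1 - ‖x‖)) (by positivity)
  refine ⟨N, fun n hn => ?_⟩
  have h3 := partial_le b x hx (ε/2) K n (fun M => by
    refine (tail_small b x hx (ε/2 * (1 - ‖x‖)) n M (fun m => ?_)).trans ?_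
    · have := hN (n+m) (by omega)
      rw [dist_zero_right] at this
      exact this.le
    · rw [mul_inv_cancel_right₀ hx1.ne']) h2
  rw [dist_zero_right, Real.norm_eq_abs, abs_of_nonneg (by positivity), inv_mul_lt_iff₀ (by positivity)]
  refine h3.trans_lt ?_
  exact mul_lt_mul_of_pos_left (by linarith) (by positivity)


lemma logsum (z : ℕ → ℂ) (hz : ∀ k, 1 < ‖z k‖)
    (μk : ℕ → ℝ) (hμk : ∀ k, 0 < μk k) (hμs : Summable μk)
    (hlog : ∀ A : ℝ, 0 < A → ∃ C : ℝ, ∀ n : ℕ, 2 ≤ n →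
      (∑' k : {k : ℕ // ‖z k‖ < 1 + 1 / n}, μk k) ≤ C * Real.log n ^ (-A)) :
    Summable fun k => μk k * (4 * Real.log (1 + Real.pi / (1 - ‖z k‖⁻¹)))^2 := by
  obtain ⟨C, hC⟩ := hlog 3 (by norm_num)
  have hex : ∀ k, ∃ J : ℕ, (‖z k‖ - 1)⁻¹ ≤ 2^(J+1) := by
    intro k
    obtain ⟨J, hJ⟩ := pow_unbounded_of_one_lt (‖z k‖ - 1)⁻¹ (one_lt_two)
    exact ⟨J, hJ.le.trans (pow_le_pow_right₀ (by norm_num) (by omega))⟩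
  classical
  set J : ℕ → ℕ := fun k => Nat.find (hex k) with hJ
  have hJ1 : ∀ k, (‖z k‖ - 1)⁻¹ ≤ 2^(J k+1) := fun k => Nat.find_spec (hex k)
  have hJ2 : ∀ k j, j < J k → ‖z k‖ < 1 + 1 / ((2^(j+1) : ℕ):ℝ) := by
    intro k j hj
    have := Nat.find_min (hex k) hj
    rw [not_le] at this
    have h0 : 0 < ‖z k‖ - 1 := by linarith [hz k]
    have h2 : ‖z k‖ - 1 < ((2:ℝ)^(j+1))⁻¹ := by
      rw [lt_inv_comm₀ h0 (by positivity)]; exact this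
    push_cast
    rw [one_div]; linarith
  -- square of J+1
  have hsq : ∀ m : ℕ, ((m:ℝ)+1)^2 = 1 + ∑ j ∈ range m, (2*(j:ℝ)+3) := by
    intro m
    induction m with
    | zero => simp
    | succ m ih => rw [Finset.sum_range_succ, ← add_assoc, ← ih]; push_cast; ring
  have hS : Summable fun k => μk k * ∑ j ∈ range (J k), (2*(j:ℝ)+3) := by
    have hnn : ∀ k, 0 ≤ μk k * ∑ j ∈ range (J k), (2*(j:ℝ)+3) := fun k =>
      mul_nonneg (hμk k).le (Finset.sum_nonneg fun j _ => by positivity)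
    have hl2 : 0 < Real.log 2 := Real.log_pos one_lt_two
    have hinner : ∀ (s : Finset ℕ) (j : ℕ), ∑ k ∈ s, (if j < J k then μk k else 0) ≤
        |C| * (((j:ℝ)+1) * Real.log 2) ^ (-3:ℝ) := by
      intro s j
      have h1 := hC (2^(j+1)) (by rw [pow_succ]; have := Nat.one_le_two_pow (n := j); omega)
      have h2 : Real.log ((2^(j+1) : ℕ):ℝ) = ((j:ℝ)+1) * Real.log 2 := by
        push_cast; rw [Real.log_pow]; push_cast; ring
      rw [h2] at h1
      have h3 : C * (((j:ℝ)+1) * Real.log 2) ^ (-3:ℝ) ≤ |C| * (((j:ℝ)+1) * Real.log 2) ^ (-3:ℝ) :=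
        mul_le_mul_of_nonneg_right (le_abs_self C) (by positivity)
      refine le_trans ?_ (h1.trans h3)
      have h4 := tsum_subtype {k : ℕ | ‖z k‖ < 1 + 1 / ((2^(j+1) : ℕ):ℝ)} μk
      refine le_trans ?_ h4.ge
      have h5 : ∀ k, 0 ≤ Set.indicator {k : ℕ | ‖z k‖ < 1 + 1 / ((2^(j+1) : ℕ):ℝ)} μk k := fun k =>
        Set.indicator_nonneg (fun i _ => (hμk i).le) k
      refine le_trans ?_ ((hμs.indicator _).sum_le_tsum s (fun k _ => h5 k))
      refine Finset.sum_le_sum fun k _ => ?_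
      split_ifs with h
      · rw [Set.indicator_of_mem (by exact hJ2 k j h)]
      · exact h5 k
    have hsum : Summable fun j : ℕ => (2*(j:ℝ)+3) * (|C| * (((j:ℝ)+1) * Real.log 2) ^ (-3:ℝ)) := by
      have h1 : Summable fun j : ℕ => (((j+1 : ℕ):ℝ)^2)⁻¹ :=
        (summable_nat_add_iff 1).mpr (Real.summable_nat_pow_inv.mpr one_lt_two)
      refine Summable.of_nonneg_of_le (fun j => by positivity) (fun j => ?_) (h1.mul_left (3 * |C| * (Real.log 2 ^ 3)⁻¹))
      have hr : (((j:ℝ)+1) * Real.log 2) ^ (-3:ℝ) = ((((j:ℝ)+1) * Real.log 2) ^ 3)⁻¹ := by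
        rw [Real.rpow_neg (by positivity)]; norm_cast
      rw [hr, mul_pow, mul_inv]
      push_cast
      have hj : (0:ℝ) < (j:ℝ)+1 := by positivity
      calc (2*(j:ℝ)+3) * (|C| * ((((j:ℝ)+1)^3)⁻¹ * (Real.log 2 ^ 3)⁻¹))
          ≤ (3 * ((j:ℝ)+1)) * (|C| * ((((j:ℝ)+1)^3)⁻¹ * (Real.log 2 ^ 3)⁻¹)) :=
            mul_le_mul_of_nonneg_right (by have : (0:ℝ) ≤ j := by positivity
                                           linarith) (by positivity)
        _ = _ := by field_simp
    refine summable_of_sum_le hnn (c := ∑' j : ℕ, (2*(j:ℝ)+3) * (|C| * (((j:ℝ)+1) * Real.log 2) ^ (-3:ℝ))) fun s => ?_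
    set m := s.sup J
    have h1 : ∀ k ∈ s, μk k * ∑ j ∈ range (J k), (2*(j:ℝ)+3) =
        ∑ j ∈ range m, (2*(j:ℝ)+3) * (if j < J k then μk k else 0) := by
      intro k hk
      have hle : J k ≤ m := Finset.le_sup hk
      rw [Finset.mul_sum]
      rw [← Finset.sum_subset (Finset.range_mono hle)]
      · refine Finset.sum_congr rfl fun j hj => ?_
        rw [if_pos (mem_range.mp hj), mul_comm]
      · intro j _ hj
        rw [if_neg (by simpa using hj), mul_zero]
    rw [Finset.sum_congr rfl h1, Finset.sum_comm]
    refine le_trans ?_ (hsum.sum_le_tsum (range m) (fun j _ => by positivity))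
    refine Finset.sum_le_sum fun j _ => ?_
    rw [← Finset.mul_sum]
    exact mul_le_mul_of_nonneg_left (hinner s j) (by positivity)
  have hS2 : Summable fun k => μk k * ((J k:ℝ)+1)^2 := by
    have := hμs.add hS
    refine this.congr fun k => ?_
    rw [hsq]; ring
  refine Summable.of_nonneg_of_le (fun k => mul_nonneg (hμk k).le (by positivity)) (fun k => ?_) (hS2.mul_left 256)
  have h0 : 0 < ‖z k‖ - 1 := by linarith [hz k]
  have hz0 : 0 < ‖z k‖ := by linarith
  have e : (1 - ‖z k‖⁻¹)⁻¹ = 1 + (‖z k‖ - 1)⁻¹ := by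
    have : (1 - ‖z k‖⁻¹) = (‖z k‖ - 1) / ‖z k‖ := by field_simp
    rw [this, inv_div]; field_simp; ring
  have hp : (1:ℝ) ≤ 2^(J k) := one_le_pow₀ (by norm_num)
  have h1 : 1 + Real.pi / (1 - ‖z k‖⁻¹) ≤ 2^(J k + 4) := by
    rw [div_eq_mul_inv, e]
    have := hJ1 k
    have hpi := Real.pi_lt_d2
    have hpi0 := Real.pi_pos
    have h2 : (0:ℝ) < (‖z k‖ - 1)⁻¹ := by positivity
    rw [pow_succ] at this
    rw [pow_add]
    nlinarith
  have hge : 1 ≤ 1 + Real.pi / (1 - ‖z k‖⁻¹) := by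
    have : 0 ≤ Real.pi / (1 - ‖z k‖⁻¹) := by
      rw [div_eq_mul_inv, e]; positivity
    linarith
  have h2 : Real.log (1 + Real.pi / (1 - ‖z k‖⁻¹)) ≤ 4 * ((J k:ℝ)+1) := by
    refine (Real.log_le_log (by linarith) h1).trans ?_
    rw [Real.log_pow]
    have := Real.log_two_lt_d9
    have h3 := Real.log_pos (one_lt_two)
    push_cast
    have : (0:ℝ) ≤ J k := by positivity
    nlinarith
  have h3 := Real.log_nonneg hge
  have h4 : (4 * Real.log (1 + Real.pi / (1 - ‖z k‖⁻¹)))^2 ≤ 256 * ((J k:ℝ)+1)^2 := by nlinarith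
  nlinarith [hμk k]

lemma integral_mu (z : ℕ → ℂ) (μk : ℕ → ℝ) (hμk : ∀ k, 0 < μk k) (g : ℂ → ℝ) (hg : Continuous g)
    (hs : Summable fun k => μk k * g (z k)) (hg0 : ∀ x, 0 ≤ g x) :
    ∫ x, g x ∂(haarCircle + Measure.sum (fun k => ENNReal.ofReal (μk k) • Measure.dirac (z k))) =
      (2*Real.pi)⁻¹ * (∫ θ in (0:ℝ)..(2*Real.pi), g (ee θ)) + ∑' k, μk k * g (z k) := by
  have hpi := Real.pi_pos
  have hm : Measurable (fun θ : ℝ => Complex.exp (θ * Complex.I)) := by fun_prop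
  have hc : Continuous (fun θ : ℝ => Complex.exp (θ * Complex.I)) := by fun_prop
  have i1 : Integrable g haarCircle := by
    rw [haarCircle, integrable_map_measure hg.aestronglyMeasurable hm.aemeasurable]
    refine Integrable.smul_measure ?_ (by simp [hpi])
    exact (hg.comp hc).integrableOn_Ioc
  have i2 : Integrable g (Measure.sum (fun k => ENNReal.ofReal (μk k) • Measure.dirac (z k))) := by
    refine ⟨hg.aestronglyMeasurable, ?_⟩
    rw [HasFiniteIntegral, lintegral_sum_measure]
    simp only [lintegral_smul_measure, lintegral_dirac]
    have : ∀ k, ENNReal.ofReal (μk k) • ‖g (z k)‖ₑ = ENNReal.ofReal (μk k * g (z k)) := by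
      intro k
      rw [ENNReal.ofReal_mul (hμk k).le, smul_eq_mul, Real.enorm_eq_ofReal (hg0 _)]
    simp only [this]
    rw [← ENNReal.ofReal_tsum_of_nonneg (fun k => mul_nonneg (hμk k).le (hg0 _)) hs]
    exact ENNReal.ofReal_lt_top
  rw [integral_add_measure i1 i2]
  congr 1
  · rw [haarCircle, integral_map hm.aemeasurable hg.aestronglyMeasurable, integral_smul_measure,
      intervalIntegral.integral_of_le (by positivity)]
    simp [ee, ENNReal.toReal_ofReal, hpi.le]
  · rw [integral_sum_measure i2]
    refine tsum_congr fun k => ?_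
    rw [integral_smul_measure, integral_dirac, ENNReal.toReal_ofReal (hμk k).le, smul_eq_mul]

lemma summ_mu (z : ℕ → ℂ) (hz : ∀ k, 1 < ‖z k‖) (hblaschke : Summable (fun k => ‖z k‖ - 1))
    (μk : ℕ → ℝ) (hμk : ∀ k, 0 < μk k) (hμs : Summable μk) (g : ℂ → ℝ) (hg : Continuous g) (hg0 : ∀ x, 0 ≤ g x) :
    Summable fun k => μk k * g (z k) := by
  set S := ∑' k, (‖z k‖ - 1)
  have hS : ∀ k, ‖z k‖ ≤ S + 1 := fun k => by
    have := hblaschke.le_tsum k (fun j _ => by linarith [hz j])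
    linarith
  obtain ⟨C, hC⟩ := (isCompact_closedBall (0:ℂ) (S+1)).exists_bound_of_continuousOn hg.continuousOn
  refine Summable.of_nonneg_of_le (fun k => mul_nonneg (hμk k).le (hg0 _)) (fun k => ?_) (hμs.mul_right C)
  refine mul_le_mul_of_nonneg_left ?_ (hμk k).le
  exact (le_abs_self _).trans (hC (z k) (by simpa using hS k))

lemma tau_mem_le (z : ℕ → ℂ) (hz : ∀ k, 1 < ‖z k‖) (hblaschke : Summable (fun k => ‖z k‖ - 1))
    (μk : ℕ → ℝ) (hμk : ∀ k, 0 < μk k) (hμs : Summable μk) (n : ℕ) (c : ℕ → ℂ) :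
    ∫ x, ‖∑ j ∈ Finset.range (n + 1), c j * x ^ j‖ ^ 2
      ∂(haarCircle + Measure.sum (fun k => ENNReal.ofReal (μk k) • Measure.dirac (z k))) =
    ∑ j ∈ range (n+1), ‖c j‖^2 + ∑' k, μk k * ‖∑ j ∈ Finset.range (n + 1), c j * z k ^ j‖ ^ 2 := by
  have hg : Continuous fun x : ℂ => ‖∑ j ∈ Finset.range (n + 1), c j * x ^ j‖ ^ 2 := by fun_prop
  have hs := summ_mu z hz hblaschke μk hμk hμs _ hg (fun x => by positivity)
  rw [integral_mu z μk hμk _ hg hs (fun x => by positivity), parseval_r,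
    inv_mul_cancel_left₀ (by have := Real.pi_pos; positivity)]

lemma tau_bdd (z : ℕ → ℂ) (hz : ∀ k, 1 < ‖z k‖) (hblaschke : Summable (fun k => ‖z k‖ - 1))
    (μk : ℕ → ℝ) (hμk : ∀ k, 0 < μk k) (hμs : Summable μk) (n : ℕ) (c : ℕ → ℂ)
    (h : ∫ x, ‖∑ j ∈ Finset.range (n + 1), c j * x ^ j‖ ^ 2
      ∂(haarCircle + Measure.sum (fun k => ENNReal.ofReal (μk k) • Measure.dirac (z k))) ≤ 1) :
    ‖c n‖ ≤ 1 := by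
  rw [tau_mem_le z hz hblaschke μk hμk hμs] at h
  have h1 : 0 ≤ ∑' k, μk k * ‖∑ j ∈ Finset.range (n + 1), c j * z k ^ j‖ ^ 2 :=
    tsum_nonneg fun k => mul_nonneg (hμk k).le (by positivity)
  have h2 := Finset.single_le_sum (f := fun j => ‖c j‖^2) (fun i _ => by positivity) (Finset.self_mem_range_succ n)
  have h3 : ‖c n‖^2 ≤ 1 := by linarith
  exact (sq_le_one_iff₀ (norm_nonneg _)).mp h3

lemma prod_tendsto (z : ℕ → ℂ) (hz : ∀ k, 1 < ‖z k‖) (hblaschke : Summable (fun k => ‖z k‖ - 1)) :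
    Tendsto (fun N => ∏ k ∈ range N, ‖z k‖⁻¹) atTop (nhds (∏' k, ‖z k‖⁻¹)) := by
  have h1 : Summable fun k => ‖(‖z k‖⁻¹ - 1 : ℝ)‖ := by
    refine Summable.of_nonneg_of_le (fun k => norm_nonneg _) (fun k => ?_) hblaschke
    have h := hz k
    have h0 : 0 < ‖z k‖ := by linarith
    have h2 : ‖z k‖⁻¹ ≤ 1 := inv_le_one_of_one_le₀ h.le
    rw [Real.norm_eq_abs, abs_of_nonpos (by linarith)]
    have : 2 - ‖z k‖ ≤ ‖z k‖⁻¹ := by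
      rw [← one_div, le_div_iff₀ h0]; nlinarith [sq_nonneg (‖z k‖ - 1)]
    linarith
  have h2 := multipliable_one_add_of_summable h1
  simp only [add_sub_cancel] at h2
  exact h2.hasProd.tendsto_prod_nat

lemma poly_reflect (b : ℕ → ℂ) (n : ℕ) (x : ℂ) (hx : x ≠ 0) (s : ℂ) :
    ‖∑ j ∈ range (n+1), (s * (starRingEnd ℂ) (b (n - j))) * x^j‖ =
      ‖s‖ * (‖x‖^n * ‖∑ j ∈ range (n+1), b j * (((starRingEnd ℂ) x)⁻¹)^j‖) := by
  have h : ∑ j ∈ range (n+1), (s * (starRingEnd ℂ) (b (n - j))) * x^j =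
      s * (x^n * (starRingEnd ℂ) (∑ j ∈ range (n+1), b j * (((starRingEnd ℂ) x)⁻¹)^j)) := by
    rw [← Finset.sum_flip, map_sum, Finset.mul_sum, Finset.mul_sum]
    refine Finset.sum_congr rfl fun j hj => ?_
    have hj' : j ≤ n := by simpa [Nat.lt_succ_iff] using hj
    rw [Nat.sub_sub_self hj', map_mul, map_pow, map_inv₀, Complex.conj_conj, pow_sub₀ _ hx hj', inv_pow]
    ring
  rw [h, norm_mul, norm_mul, norm_pow, RCLike.norm_conj]

/-- Lower estimate for `τ_n` in the case of weight `w ≡ 1`, under the logarithmic decay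
condition on the masses: `liminf τ_n ≥ B(0) = ∏ |z_k|⁻¹`. -/
theorem tau_liminf (z : ℕ → ℂ) (hz : ∀ k, 1 < ‖z k‖)
    (hblaschke : Summable (fun k => ‖z k‖ - 1))
    (μk : ℕ → ℝ) (hμk : ∀ k, 0 < μk k) (hμs : Summable μk)
    (hlog : ∀ A : ℝ, 0 < A → ∃ C : ℝ, ∀ n : ℕ, 2 ≤ n →
      (∑' k : {k : ℕ // ‖z k‖ < 1 + 1 / n}, μk k) ≤ C * Real.log n ^ (-A)) :
    (∏' k, ‖z k‖⁻¹) ≤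
      liminf
        (tauSeq (haarCircle +
          Measure.sum (fun k => ENNReal.ofReal (μk k) • Measure.dirac (z k))))
        atTop := by
  have hz0 : ∀ k, z k ≠ 0 := fun k => norm_pos_iff.mp (by linarith [hz k])
  set L := ∏' k, ‖z k‖⁻¹ with hLdef
  set μ := haarCircle + Measure.sum (fun k => ENNReal.ofReal (μk k) • Measure.dirac (z k)) with hμ
  set w : ℕ → ℂ := fun k => ((starRingEnd ℂ) (z k))⁻¹ with hwdef
  have hwn : ∀ k, ‖w k‖ = ‖z k‖⁻¹ := fun k => by simp [hwdef]
  have hw : ∀ k, ‖w k‖ < 1 := fun k => by rw [hwn]; exact inv_lt_one_of_one_lt₀ (hz k)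
  have hw0 : ∀ k, w k ≠ 0 := fun k => by simp [hwdef, hz0 k]
  obtain ⟨b, hb0, hb1, hb2, hb3⟩ := exists_coeff w hw L (by
    simp only [hwn]; exact prod_tendsto z hz hblaschke)
  set G : ℕ → ℕ → ℝ := fun n k => (‖w k‖^n)⁻¹ * ‖∑ j ∈ range n, b j * (w k)^j‖ with hG
  have hG0 : ∀ n k, 0 ≤ G n k := fun n k => by positivity
  have hGle : ∀ n k, G n k ≤ 4 * Real.log (1 + Real.pi / (1 - ‖z k‖⁻¹)) := by
    intro n k
    have h := partial_le b (w k) (hw k) _ _ n (fun M => hb2 n M (w k) (hw k)) (hb3 k)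
    have hp : 0 < ‖w k‖ := norm_pos_iff.mpr (hw0 k)
    rw [← hwn]
    simp only [hG]
    rw [inv_mul_le_iff₀ (by positivity)]
    exact h
  have hGt : ∀ k, Tendsto (fun n => G n k) atTop (nhds 0) := fun k =>
    partial_tendsto b hb1 (w k) (hw k) (hw0 k) _ (hb3 k)
  have hsumm := logsum z hz μk hμk hμs hlog
  have hdom : ∀ n k, μk k * (G n k)^2 ≤ μk k * (4 * Real.log (1 + Real.pi / (1 - ‖z k‖⁻¹)))^2 := fun n k =>
    mul_le_mul_of_nonneg_left (pow_le_pow_left₀ (hG0 n k) (hGle n k) 2) (hμk k).le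
  set D : ℕ → ℝ := fun n => ∑' k, μk k * (G (n+1) k)^2 with hD
  have hDs : ∀ n, Summable fun k => μk k * (G (n+1) k)^2 := fun n =>
    Summable.of_nonneg_of_le (fun k => mul_nonneg (hμk k).le (by positivity)) (hdom (n+1)) hsumm
  have hD0 : ∀ n, 0 ≤ D n := fun n => tsum_nonneg fun k => mul_nonneg (hμk k).le (by positivity)
  have hDt : Tendsto D atTop (nhds 0) := by
    have := tendsto_tsum_of_dominated_convergence (𝓕 := atTop) (f := fun n k => μk k * (G (n+1) k)^2)
      (g := fun _ : ℕ => (0:ℝ)) hsumm (fun k => by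
        have h := (((hGt k).comp (tendsto_add_atTop_nat 1)).pow 2).const_mul (μk k)
        simpa [Function.comp_def] using h) (Eventually.of_forall fun n k => by
        rw [Real.norm_eq_abs, abs_of_nonneg (mul_nonneg (hμk k).le (by positivity))]
        exact hdom (n+1) k)
    simpa using this
  have hbdd : ∀ n, ∀ x ∈ { x : ℝ | ∃ c : ℕ → ℂ,
      (∫ z : ℂ, ‖∑ j ∈ Finset.range (n + 1), c j * z ^ j‖ ^ 2 ∂μ) ≤ 1 ∧ x = ‖c n‖ }, x ≤ 1 := by
    rintro n x ⟨c, hc, rfl⟩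
    exact tau_bdd z hz hblaschke μk hμk hμs n c hc
  have hle1 : ∀ n, tauSeq μ n ≤ 1 := fun n => Real.sSup_le (hbdd n) zero_le_one
  have hlow : ∀ n, (Real.sqrt (1 + D n))⁻¹ * L ≤ tauSeq μ n := by
    intro n
    have hq : 0 < 1 + D n := by linarith [hD0 n]
    have hs0 : 0 ≤ (Real.sqrt (1 + D n))⁻¹ := by positivity
    have hs2 : ((Real.sqrt (1 + D n))⁻¹)^2 = (1 + D n)⁻¹ := by rw [inv_pow, Real.sq_sqrt hq.le]
    set s := (Real.sqrt (1 + D n))⁻¹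
    have hsn : ‖(s:ℂ)‖ = s := by rw [Complex.norm_real, Real.norm_eq_abs, abs_of_nonneg hs0]
    refine le_csSup ⟨1, hbdd n⟩ ⟨fun j => (s:ℂ) * (starRingEnd ℂ) (b (n - j)), ?_, ?_⟩
    · rw [hμ, tau_mem_le z hz hblaschke μk hμk hμs]
      have e1 : ∑ j ∈ range (n+1), ‖(s:ℂ) * (starRingEnd ℂ) (b (n - j))‖^2 ≤ s^2 := by
        simp only [norm_mul, RCLike.norm_conj, hsn, mul_pow]
        rw [← Finset.mul_sum, Finset.sum_flip (fun j => ‖b j‖^2)]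
        exact mul_le_of_le_one_right (by positivity) (hb1 _)
      have e2 : ∑' k, μk k * ‖∑ j ∈ Finset.range (n + 1), (s:ℂ) * (starRingEnd ℂ) (b (n - j)) * z k ^ j‖ ^ 2 ≤ s^2 * D n := by
        rw [hD]; simp only
        rw [← tsum_mul_left]
        have hsm := (hDs n).mul_left (s^2)
        have hle : ∀ k, μk k * ‖∑ j ∈ Finset.range (n + 1), (s:ℂ) * (starRingEnd ℂ) (b (n - j)) * z k ^ j‖ ^ 2 ≤
            s^2 * (μk k * (G (n+1) k)^2) := by
          intro k
          rw [poly_reflect b n (z k) (hz0 k) s, hsn, mul_pow, mul_left_comm]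
          have hk : ‖z k‖^n * ‖∑ j ∈ range (n+1), b j * (((starRingEnd ℂ) (z k))⁻¹)^j‖ ≤ G (n+1) k := by
            refine mul_le_mul_of_nonneg_right ?_ (norm_nonneg _)
            rw [hwn, inv_pow, inv_inv]
            exact pow_le_pow_right₀ (hz k).le (by omega)
          refine mul_le_mul_of_nonneg_left ?_ (by positivity)
          refine mul_le_mul_of_nonneg_left ?_ (hμk k).le
          exact pow_le_pow_left₀ (by positivity) hk 2
        exact Summable.tsum_le_tsum hle (Summable.of_nonneg_of_le
          (fun k => mul_nonneg (hμk k).le (by positivity)) hle hsm) hsm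
      calc _ ≤ s^2 + s^2 * D n := add_le_add e1 e2
        _ = s^2 * (1 + D n) := by ring
        _ = 1 := by rw [hs2, inv_mul_cancel₀ hq.ne']
        _ ≤ 1 := le_rfl
    · rw [norm_mul, RCLike.norm_conj, hsn, Nat.sub_self, hb0]
  have hlim : Tendsto (fun n => (Real.sqrt (1 + D n))⁻¹ * L) atTop (nhds L) := by
    have h := (((hDt.const_add 1).sqrt).inv₀ (by simp)).mul_const L
    simpa using h
  rw [← hlim.liminf_eq]
  refine liminf_le_liminf (Eventually.of_forall hlow) hlim.isBoundedUnder_ge ?_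
  exact (isBoundedUnder_of ⟨1, hle1⟩).isCoboundedUnder_ge
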